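/- Laplace transform asymptotics of the distance-to-query: as β → ∞, 𝔼[e^{−β T_1}] = C(q) Γ(1/α + 1) β^{−1/α} (1 + o(1)), where Γ is the gamma function; that is, β^{1/α} 𝔼[e^{−β T_1}] → C(q) Γ(1/α + 1) as β → ∞. -/

import Mathlib

/-!
The idea is to thicken the sphere to a shell and to apply Laplace's method in the flat space `ℝ^d`,
so that no chart of the sphere is needed. For `x = r y` with `r = ‖x‖` and `y` on the sphere, the
phase `φ(x) = (r - 1)² / 2 + (1 - ⟪q, y⟫)` has `q` as a nondegenerate minimum:
`φ(x) = ‖x - q‖² / 2 + o(‖x - q‖²)`, and `φ(x) ≥ ‖x - q‖² / 4` for `r < 2`. Hence, by rescaling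
around `q` and dominated convergence (`laplace_core`), with `β = t²`,
`t ^ d * ∫_{‖x‖ < 2} ρ(x / ‖x‖) exp (-t² φ(x)) dx → √(2π) ^ d * ρ(q)`.

Since `φ` is a sum of a radial and an angular part, in polar coordinates (`integral_polar`) this
integral is the product of `∫ ρ(y) exp (-t² (1 - ⟪q, y⟫)) dσ(y)`, which is the Laplace transform to
be estimated, and of `∫₀² r ^ (d - 1) exp (-t² (r - 1)² / 2) dr`, which is `~ √(2π) / t` by
`laplace_core` in dimension one. Dividing, the angular integral is
`~ (√(2π) / t) ^ (d - 1) * ρ(q)` (`angular_limit`), and the formula for the volume of the unit ball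
identifies `(2π) ^ ((d - 1) / 2) * ρ(q)` with `C(q) Γ(1 / α + 1)` (`constant_eq`).
-/

open MeasureTheory ProbabilityTheory Real Filter Topology
open scoped RealInnerProductSpace ENNReal

noncomputable section

namespace AttnScaling

/-- ambient Euclidean space `ℝ^d` -/
abbrev Euc (d : ℕ) := EuclideanSpace ℝ (Fin d)

/-- The surface measure on the unit sphere `S^{d-1} ⊆ ℝ^d`, viewed as a measure on the
ambient space (the pushforward of `volume.toSphere` along the inclusion). -/
def surfaceMeasure (d : ℕ) : Measure (Euc d) :=
  Measure.map Subtype.val ((volume : Measure (Euc d)).toSphere)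

/-- Surface area of the unit sphere `S^{m-1} ⊆ ℝ^m`. -/
def sphereArea (m : ℕ) : ℝ :=
  (((volume : Measure (Euc m)).toSphere) Set.univ).toReal

/-- The law `ρ dσ` of a single token on the sphere. -/
def tokenLaw (d : ℕ) (ρ : Euc d → ℝ) : Measure (Euc d) :=
  (surfaceMeasure d).withDensity fun y => ENNReal.ofReal (ρ y)

/-- the exponent `α = 2/(d-1)` -/
def alpha (d : ℕ) : ℝ := 2 / ((d : ℝ) - 1)

/-- the constant `C(q) = 2^{1/α} σ_{d-2} ρ(q) / (d-1)` -/
def Cq (d : ℕ) (ρ : Euc d → ℝ) (q : Euc d) : ℝ :=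
  (2 : ℝ) ^ (1 / alpha d) * sphereArea (d - 1) * ρ q / ((d : ℝ) - 1)

/-- **Laplace's method around a nondegenerate minimum.** If `φ` has at `q` the second-order
expansion `φ x = ‖x - q‖² / 2 + o(‖x - q‖²)` and dominates `‖x - q‖² / 4` where the bounded
amplitude `F` does not vanish, then `t ^ dim E * ∫ F * exp (-t² φ)` tends to
`√(2π) ^ dim E * F q`. -/
lemma laplace_core {E : Type*} [NormedAddCommGroup E] [InnerProductSpace ℝ E]
    [FiniteDimensional ℝ E] [MeasurableSpace E] [BorelSpace E] {q : E} {F φ : E → ℝ} {M : ℝ}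
    (hF : Measurable F) (hφ : Measurable φ) (hM : ∀ x, |F x| ≤ M)
    (hlow : ∀ x, F x ≠ 0 → ‖x - q‖ ^ 2 / 4 ≤ φ x) (hFc : ContinuousAt F q)
    (hφq : (fun x => φ x - ‖x - q‖ ^ 2 / 2) =o[𝓝 q] fun x => ‖x - q‖ ^ 2) :
    Tendsto (fun t : ℝ => t ^ Module.finrank ℝ E * ∫ x, F x * Real.exp (-(t ^ 2 * φ x))) atTop
      (𝓝 (√(2 * π) ^ Module.finrank ℝ E * F q)) := by
  have hM0 : 0 ≤ M := (abs_nonneg _).trans (hM q)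
  -- the substitution `x = q + t⁻¹ • u`
  have hsub : ∀ t : ℝ, 0 < t →
      ∫ u, F (q + t⁻¹ • u) * Real.exp (-(t ^ 2 * φ (q + t⁻¹ • u))) =
        t ^ Module.finrank ℝ E * ∫ x, F x * Real.exp (-(t ^ 2 * φ x)) := by
    intro t ht
    have h := Measure.integral_comp_smul (volume : Measure E)
      (fun x => F (q + x) * Real.exp (-(t ^ 2 * φ (q + x)))) t⁻¹
    rw [h, integral_add_left_eq_self (μ := (volume : Measure E))
      (fun x => F x * Real.exp (-(t ^ 2 * φ x))) q, inv_pow, inv_inv, abs_of_pos (by positivity),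
      smul_eq_mul]
  have hlim : Tendsto
      (fun t : ℝ => ∫ u, F (q + t⁻¹ • u) * Real.exp (-(t ^ 2 * φ (q + t⁻¹ • u)))) atTop
      (𝓝 (∫ u : E, F q * Real.exp (-(1 / 2) * ‖u‖ ^ 2))) := by
    refine tendsto_integral_filter_of_dominated_convergence
      (fun u => M * Real.exp (-(1 / 4) * ‖u‖ ^ 2)) ?_ ?_ ?_ ?_
    · refine Eventually.of_forall fun t => Measurable.aestronglyMeasurable ?_
      have hm : Measurable fun u : E => q + t⁻¹ • u := by fun_prop
      exact (hF.comp hm).mul (((hφ.comp hm).const_mul _).neg.exp)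
    · filter_upwards [eventually_gt_atTop 0] with t ht
      refine Eventually.of_forall fun u => ?_
      rw [Real.norm_eq_abs, abs_mul, Real.abs_exp]
      by_cases h0 : F (q + t⁻¹ • u) = 0
      · rw [h0, abs_zero, zero_mul]; positivity
      · have h1 := hlow _ h0
        rw [add_sub_cancel_left, norm_smul, Real.norm_eq_abs, abs_of_pos (inv_pos.2 ht)] at h1
        have h2 : ‖u‖ ^ 2 / 4 ≤ t ^ 2 * φ (q + t⁻¹ • u) := by
          calc ‖u‖ ^ 2 / 4 = t ^ 2 * ((t⁻¹ * ‖u‖) ^ 2 / 4) := by field_simp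
            _ ≤ _ := by gcongr
        have h3 : Real.exp (-(t ^ 2 * φ (q + t⁻¹ • u))) ≤ Real.exp (-(1 / 4) * ‖u‖ ^ 2) :=
          Real.exp_le_exp.2 (by linarith)
        exact mul_le_mul (hM _) h3 (Real.exp_pos _).le hM0
    · by_contra hni
      have h := GaussianFourier.integral_rexp_neg_mul_sq_norm (V := E) (b := 1 / 4) (by norm_num)
      rw [integral_undef (fun hi => hni (hi.const_mul M))] at h
      have : (0 : ℝ) < (π / (1 / 4)) ^ (Module.finrank ℝ E / 2 : ℝ) := by positivity
      linarith
    · refine Eventually.of_forall fun u => ?_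
      have hx : Tendsto (fun t : ℝ => q + t⁻¹ • u) atTop (𝓝 q) := by
        have := (tendsto_inv_atTop_zero (𝕜 := ℝ)).smul_const u
        simpa using this.const_add q
      refine (hFc.tendsto.comp hx).mul ((Real.continuous_exp.tendsto _).comp ?_)
      have ho := hφq.comp_tendsto hx
      have ho2 : (fun t : ℝ => t ^ 2 * (φ (q + t⁻¹ • u) - ‖t⁻¹ • u‖ ^ 2 / 2)) =o[atTop]
          fun t : ℝ => t ^ 2 * ‖t⁻¹ • u‖ ^ 2 := by
        have := (Asymptotics.isBigO_refl (fun t : ℝ => t ^ 2) atTop).mul_isLittleO ho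
        simpa [Function.comp_def] using this
      have e1 : ∀ t : ℝ, 0 < t → t ^ 2 * ‖t⁻¹ • u‖ ^ 2 = ‖u‖ ^ 2 := by
        intro t ht
        rw [norm_smul, Real.norm_eq_abs, abs_of_pos (inv_pos.2 ht)]; field_simp
      have ho3 : (fun t : ℝ => t ^ 2 * φ (q + t⁻¹ • u) - ‖u‖ ^ 2 / 2) =o[atTop]
          fun _ : ℝ => ‖u‖ ^ 2 := by
        refine ho2.congr' ?_ ?_
        · filter_upwards [eventually_gt_atTop 0] with t ht
          rw [mul_sub, ← e1 t ht]; ring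
        · filter_upwards [eventually_gt_atTop 0] with t ht using e1 t ht
      have h4 : Tendsto (fun t : ℝ => t ^ 2 * φ (q + t⁻¹ • u) - ‖u‖ ^ 2 / 2) atTop (𝓝 0) :=
        (Asymptotics.isLittleO_one_iff ℝ).1
            (ho3.trans_isBigO (Asymptotics.isBigO_const_const _ one_ne_zero _))
      have h5 := (h4.add_const (‖u‖ ^ 2 / 2)).neg
      refine (h5.congr fun t => by ring).trans_eq ?_
      congr 1; ring
  rw [integral_const_mul, GaussianFourier.integral_rexp_neg_mul_sq_norm (by norm_num)] at hlim
  have hc : (π / (1 / 2)) ^ (Module.finrank ℝ E / 2 : ℝ) = √(2 * π) ^ Module.finrank ℝ E := by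
    rw [Real.sqrt_eq_rpow, ← Real.rpow_natCast, ← Real.rpow_mul (by positivity)]
    congr 1 <;> ring
  rw [hc, mul_comm] at hlim
  refine hlim.congr' ?_
  filter_upwards [eventually_gt_atTop 0] with t ht using hsub t ht

/-- Integration in polar coordinates of a product of an angular and a radial function. -/
lemma integral_polar {E : Type*} [NormedAddCommGroup E] [InnerProductSpace ℝ E]
    [FiniteDimensional ℝ E] [MeasurableSpace E] [BorelSpace E] [Nontrivial E]
    (f g : E → ℝ) (h : ℝ → ℝ) (hf : ∀ x, x ≠ 0 → f x = g (‖x‖⁻¹ • x) * h ‖x‖) :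
    ∫ x, f x = (∫ y, g y ∂(volume : Measure E).toSphere) *
      ∫ r in Set.Ioi (0 : ℝ), r ^ (Module.finrank ℝ E - 1) * h r := by
  set μ : Measure E := volume
  calc
    ∫ x, f x ∂μ = ∫ x : ({(0)}ᶜ : Set E), f x.1 ∂(μ.comap (↑)) := by
      rw [integral_subtype_comap (measurableSet_singleton _).compl f, restrict_compl_singleton]
    _ = ∫ x : ({(0)}ᶜ : Set E), g (‖x.1‖⁻¹ • x.1) * h ‖x.1‖ ∂(μ.comap (↑)) :=
      integral_congr_ae (Eventually.of_forall fun x => hf x.1 x.2)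
    _ = ∫ x, g x.1 * h x.2 ∂μ.toSphere.prod (.volumeIoiPow (Module.finrank ℝ E - 1)) := by
      simpa using μ.measurePreserving_homeomorphUnitSphereProd.integral_comp
        (Homeomorph.measurableEmbedding _)
        (fun x : Metric.sphere (0 : E) 1 × Set.Ioi (0 : ℝ) => g x.1 * h x.2)
    _ = (∫ y, g y ∂μ.toSphere) *
        ∫ x : Set.Ioi (0 : ℝ), h x ∂.volumeIoiPow (Module.finrank ℝ E - 1) :=
      integral_prod_mul (fun y : Metric.sphere (0 : E) 1 => g y)
        (fun r : Set.Ioi (0 : ℝ) => h r)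
    _ = _ := by
      congr 1
      simp only [Measure.volumeIoiPow, ENNReal.ofReal]
      rw [integral_withDensity_eq_integral_smul,
        integral_subtype_comap measurableSet_Ioi
          fun a ↦ Real.toNNReal (a ^ (Module.finrank ℝ E - 1)) • h a,
        setIntegral_congr_fun measurableSet_Ioi fun x hx ↦ ?_]
      · rw [NNReal.smul_def, Real.coe_toNNReal _ (pow_nonneg (le_of_lt hx) _), smul_eq_mul]
      · exact (measurable_subtype_coe.pow_const _).real_toNNReal

/-- The expectation under the token law as an integral over the sphere. -/
lemma integral_tokenLaw {d : ℕ} {ρ : Euc d → ℝ} (hρ : Continuous ρ) (hρnn : ∀ y, 0 ≤ ρ y)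
    (g : Euc d → ℝ) :
    ∫ y, g y ∂tokenLaw d ρ = ∫ y, ρ y * g y ∂(volume : Measure (Euc d)).toSphere := by
  have hemb : MeasurableEmbedding (Subtype.val : Metric.sphere (0 : Euc d) 1 → Euc d) :=
    MeasurableEmbedding.subtype_coe Metric.isClosed_sphere.measurableSet
  simp only [tokenLaw, ENNReal.ofReal]
  rw [integral_withDensity_eq_integral_smul hρ.measurable.real_toNNReal, surfaceMeasure,
    hemb.integral_map]
  refine integral_congr_ae (Eventually.of_forall fun y => ?_)
  simp [NNReal.smul_def, hρnn]

/-- The phase `(‖x‖ - 1)² / 2 + (1 - ⟪q, x / ‖x‖⟫)`, a sum of a radial and an angular part. -/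
def phase {d : ℕ} (q x : Euc d) : ℝ := (‖x‖ - 1) ^ 2 / 2 + (1 - ⟪q, ‖x‖⁻¹ • x⟫)

lemma phase_eq {d : ℕ} {q : Euc d} (hq : ‖q‖ = 1) {x : Euc d} (hx : x ≠ 0) :
    phase q x - ‖x - q‖ ^ 2 / 2 =
      (1 - ‖x‖) / ‖x‖ * (‖x - q‖ ^ 2 - (‖x‖ - 1) ^ 2) / 2 := by
  have hr : ‖x‖ ≠ 0 := norm_ne_zero_iff.2 hx
  rw [phase, inner_smul_right, @norm_sub_sq_real, hq, real_inner_comm x q]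
  field_simp
  ring

lemma sq_norm_sub_one_le {d : ℕ} {q : Euc d} (hq : ‖q‖ = 1) (x : Euc d) :
    (‖x‖ - 1) ^ 2 ≤ ‖x - q‖ ^ 2 := by
  rw [← hq]
  exact sq_le_sq.2 (by rw [abs_norm]; exact abs_norm_sub_norm_le x q)

lemma phase_lower {d : ℕ} {q : Euc d} (hq : ‖q‖ = 1) {x : Euc d} (hx : ‖x‖ < 2) :
    ‖x - q‖ ^ 2 / 4 ≤ phase q x := by
  rcases eq_or_ne x 0 with rfl | h0
  · norm_num [phase, hq]
  · have h1 := phase_eq hq h0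
    have h2 := sq_norm_sub_one_le hq x
    have hr : 0 < ‖x‖ := norm_pos_iff.2 h0
    -- for `r ∈ (0, 2)` the coefficient `(1 - r) / r` is at least `-1 / 2`
    have h3 : -(1 / 2) ≤ (1 - ‖x‖) / ‖x‖ := by
      rw [le_div_iff₀ hr]; linarith
    nlinarith [mul_le_mul_of_nonneg_right h3 (sub_nonneg.2 h2), sq_nonneg (‖x‖ - 1)]

lemma phase_isLittleO {d : ℕ} {q : Euc d} (hq : ‖q‖ = 1) :
    (fun x => phase q x - ‖x - q‖ ^ 2 / 2) =o[𝓝 q] fun x => ‖x - q‖ ^ 2 := by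
  have hq0 : q ≠ 0 := by rintro rfl; simp at hq
  have hc : (fun x : Euc d => (1 - ‖x‖) / ‖x‖) =o[𝓝 q] fun _ => (1 : ℝ) := by
    rw [Asymptotics.isLittleO_one_iff]
    have : ContinuousAt (fun x : Euc d => (1 - ‖x‖) / ‖x‖) q :=
      ContinuousAt.div (by fun_prop) (by fun_prop) (by simp [hq])
    simpa [ContinuousAt, hq] using this
  have hb : (fun x : Euc d => (‖x - q‖ ^ 2 - (‖x‖ - 1) ^ 2) / 2) =O[𝓝 q]
      fun x => ‖x - q‖ ^ 2 := by
    refine Asymptotics.IsBigO.of_bound 1 (Eventually.of_forall fun x => ?_)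
    have h2 := sq_norm_sub_one_le hq x
    rw [Real.norm_eq_abs, Real.norm_eq_abs, abs_of_nonneg (by linarith),
      abs_of_nonneg (by positivity)]
    nlinarith [sq_nonneg (‖x‖ - 1), sq_nonneg ‖x - q‖]
  refine (hc.mul_isBigO hb).congr' ?_ (by simp)
  filter_upwards [isOpen_ne.mem_nhds hq0] with x hx
  rw [phase_eq hq hx]; ring

lemma measurable_phase {d : ℕ} (q : Euc d) : Measurable (phase q) := by
  unfold phase
  fun_prop

/-- The radial factor satisfies `t * ∫₀² r ^ n * exp (-t² (r - 1)² / 2) dr → √(2π)`. -/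
lemma radial_limit (n : ℕ) :
    Tendsto (fun t : ℝ => t * ∫ r in Set.Ioi (0 : ℝ),
      r ^ n * (Set.Iio 2).indicator (fun r => Real.exp (-(t ^ 2 * ((r - 1) ^ 2 / 2)))) r) atTop
      (𝓝 √(2 * π)) := by
  have key := laplace_core (E := ℝ) (q := 1) (M := 2 ^ n)
    (F := (Set.Ioo 0 2).indicator fun r => r ^ n) (φ := fun r => (r - 1) ^ 2 / 2)
    ((measurable_id.pow_const n).indicator measurableSet_Ioo) (by fun_prop) ?_ ?_ ?_ ?_
  · have h1 : (1 : ℝ) ∈ Set.Ioo (0 : ℝ) 2 := by norm_num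
    rw [Module.finrank_self, Set.indicator_of_mem h1, one_pow, mul_one, pow_one] at key
    refine key.congr fun t => ?_
    rw [pow_one, ← integral_indicator measurableSet_Ioi]
    congr 2
    ext r
    by_cases h0 : 0 < r <;> by_cases h2 : r < 2 <;> simp [Set.indicator, h0, h2]
  · intro r
    by_cases h : r ∈ Set.Ioo (0 : ℝ) 2
    · rw [Set.indicator_of_mem h, abs_of_nonneg (pow_nonneg h.1.le _)]
      exact pow_le_pow_left₀ h.1.le h.2.le _
    · rw [Set.indicator_of_notMem h, abs_zero]; positivity
  · intro r _
    rw [Real.norm_eq_abs, sq_abs]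
    nlinarith [sq_nonneg (r - 1)]
  · have : (Set.Ioo 0 2).indicator (fun r : ℝ => r ^ n) =ᶠ[𝓝 1] fun r => r ^ n := by
      filter_upwards [Ioo_mem_nhds (show (0 : ℝ) < 1 by norm_num) (show (1 : ℝ) < 2 by norm_num)]
        with r hr using Set.indicator_of_mem hr _
    exact ContinuousAt.congr (by fun_prop) this.symm
  · simp

/-- The angular factor satisfies
`t ^ (d - 1) * ∫ ρ y * exp (-t² (1 - ⟪q, y⟫)) dσ(y) → √(2π) ^ (d - 1) ρ(q)`,
obtained by dividing the `d`-dimensional Laplace limit by the radial one. -/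
lemma angular_limit {d : ℕ} (hd : 2 ≤ d) {q : Euc d} (hq : ‖q‖ = 1) {ρ : Euc d → ℝ}
    (hρ : Continuous ρ) :
    Tendsto (fun t : ℝ => t ^ (d - 1) * ∫ y : Metric.sphere (0 : Euc d) 1,
      ρ y * Real.exp (-(t ^ 2 * (1 - ⟪q, (y : Euc d)⟫))) ∂(volume : Measure (Euc d)).toSphere) atTop
      (𝓝 (√(2 * π) ^ (d - 1) * ρ q)) := by
  have hq0 : q ≠ 0 := by rintro rfl; simp at hq
  have : Nontrivial (Euc d) := ⟨q, 0, hq0⟩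
  obtain ⟨M, hM⟩ := (isCompact_closedBall (0 : Euc d) 1).exists_bound_of_continuousOn
    hρ.continuousOn
  have hunit : ∀ x : Euc d, ‖‖x‖⁻¹ • x‖ ≤ 1 := by
    intro x
    rw [norm_smul, norm_inv, norm_norm]
    exact inv_mul_le_one
  have hM0 : 0 ≤ M := (norm_nonneg _).trans (hM 0 (by simp))
  have hmem : q ∈ Metric.ball (0 : Euc d) 2 := by simp [hq]
  have key := laplace_core (E := Euc d) (q := q) (M := M)
    (F := (Metric.ball 0 2).indicator fun x => ρ (‖x‖⁻¹ • x)) (φ := phase q)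
    ((hρ.measurable.comp (by fun_prop)).indicator measurableSet_ball) (measurable_phase q)
    ?_ ?_ ?_ (phase_isLittleO hq)
  · rw [finrank_euclideanSpace_fin, Set.indicator_of_mem hmem, hq, inv_one, one_smul] at key
    have hrad := radial_limit (d - 1)
    have hs : √(2 * π) ≠ 0 := by positivity
    have hdiv := key.div hrad hs
    have hpow : ∀ s : ℝ, s ^ d = s ^ (d - 1) * s := fun s => by
      rw [← pow_succ]; congr 1; omega
    have hval : √(2 * π) ^ d * ρ q / √(2 * π) = √(2 * π) ^ (d - 1) * ρ q := by
      rw [hpow]; field_simp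
    rw [hval] at hdiv
    refine hdiv.congr' ?_
    filter_upwards [hrad.eventually_ne hs] with t ht
    have hp := integral_polar
      (fun x : Euc d => (Metric.ball 0 2).indicator (fun x => ρ (‖x‖⁻¹ • x)) x *
        Real.exp (-(t ^ 2 * phase q x)))
      (fun y => ρ y * Real.exp (-(t ^ 2 * (1 - ⟪q, y⟫))))
      ((Set.Iio 2).indicator (fun r => Real.exp (-(t ^ 2 * ((r - 1) ^ 2 / 2))))) ?_
    · rw [finrank_euclideanSpace_fin] at hp
      simp only [Pi.div_apply]
      rw [hp, div_eq_iff ht, hpow t]; ring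
    · intro x _
      by_cases h2 : ‖x‖ < 2
      · rw [Set.indicator_of_mem (by simpa using h2), Set.indicator_of_mem (by simpa using h2),
          phase, mul_assoc, ← Real.exp_add]
        congr 2; ring
      · rw [Set.indicator_of_notMem (by simpa using h2), Set.indicator_of_notMem (by simpa using h2)]
        simp
  · intro x
    by_cases h : x ∈ Metric.ball (0 : Euc d) 2
    · rw [Set.indicator_of_mem h]
      exact hM _ (by simpa using hunit x)
    · rw [Set.indicator_of_notMem h, abs_zero]; exact hM0
  · intro x hx
    have h := Set.mem_of_indicator_ne_zero hx
    exact phase_lower hq (by simpa using h)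
  · have : (Metric.ball 0 2).indicator (fun x : Euc d => ρ (‖x‖⁻¹ • x)) =ᶠ[𝓝 q]
        fun x => ρ (‖x‖⁻¹ • x) := by
      filter_upwards [Metric.isOpen_ball.mem_nhds hmem] with x hx using Set.indicator_of_mem hx _
    refine ContinuousAt.congr (hρ.continuousAt.comp ?_) this.symm
    exact (continuous_norm.continuousAt.inv₀ (by simp [hq])).smul continuousAt_id

lemma one_div_alpha (d : ℕ) : 1 / alpha d = ((d : ℝ) - 1) / 2 := by
  rw [alpha, one_div_div]

/-- `σ_{n-1} = n * vol(B^n)` and `vol(B^n) Γ(n/2 + 1) = π ^ (n/2)` turn the constant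
`C(q) Γ(1/α + 1)` into `(2π) ^ ((d-1)/2) ρ(q)`. -/
lemma constant_eq {d : ℕ} (hd : 2 ≤ d) (ρ : Euc d → ℝ) (q : Euc d) :
    Cq d ρ q * Real.Gamma (1 / alpha d + 1) = √(2 * π) ^ (d - 1) * ρ q := by
  obtain ⟨n, rfl⟩ : ∃ n, d = n + 1 := ⟨d - 1, by omega⟩
  have hn : 0 < n := by omega
  have : Nonempty (Fin n) := ⟨⟨0, hn⟩⟩
  have hG : 0 < Real.Gamma ((n : ℝ) / 2 + 1) := Real.Gamma_pos_of_pos (by positivity)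
  have hn' : (n : ℝ) ≠ 0 := by positivity
  have hα : 1 / alpha (n + 1) = (n : ℝ) / 2 := by rw [one_div_alpha]; push_cast; ring
  have hS : sphereArea n = n * (√π ^ n / Real.Gamma ((n : ℝ) / 2 + 1)) := by
    rw [sphereArea, Measure.toSphere_apply_univ, EuclideanSpace.volume_ball,
      finrank_euclideanSpace_fin, Fintype.card_fin, ENNReal.ofReal_one, one_pow, one_mul,
      ENNReal.toReal_mul, ENNReal.toReal_natCast, ENNReal.toReal_ofReal (by positivity)]
  have h2 : (2 : ℝ) ^ ((n : ℝ) / 2) = √2 ^ n := by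
    rw [Real.sqrt_eq_rpow, ← Real.rpow_natCast, ← Real.rpow_mul (by positivity)]
    congr 1; ring
  rw [Cq, hα, Nat.add_sub_cancel, hS, h2, Real.sqrt_mul (by norm_num), mul_pow]
  push_cast
  rw [add_sub_cancel_right]
  field_simp

variable {Ω : Type*} [MeasurableSpace Ω]

/-- **Laplace transform asymptotics of the distance-to-query.** As `β → ∞`,
`β^{1/α} 𝔼[e^{-β T_1}] → C(q) Γ(1/α + 1)`. -/
theorem laplace_asymptotics_dtq
    {d : ℕ} (hd : 2 ≤ d) {q : Euc d} (hq : ‖q‖ = 1)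
    {ρ : Euc d → ℝ} (hρC2 : ContDiff ℝ 2 ρ) (hρnn : ∀ y, 0 ≤ ρ y) (hρq : 0 < ρ q)
    (P : Measure Ω) [IsProbabilityMeasure P]
    {x₁ : Ω → Euc d} (hmeas : Measurable x₁) (hsph : ∀ ω, ‖x₁ ω‖ = 1)
    (hlaw : Measure.map x₁ P = tokenLaw d ρ) :
    Tendsto
      (fun β : ℝ =>
        β ^ (1 / alpha d) * ∫ ω, Real.exp (-(β * (1 - ⟪q, x₁ ω⟫))) ∂P)
      atTop (𝓝 (Cq d ρ q * Real.Gamma (1 / alpha d + 1))) := by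
  have hρ : Continuous ρ := hρC2.continuous
  have hI : ∀ β : ℝ, ∫ ω, Real.exp (-(β * (1 - ⟪q, x₁ ω⟫))) ∂P =
      ∫ y : Metric.sphere (0 : Euc d) 1, ρ y * Real.exp (-(β * (1 - ⟪q, (y : Euc d)⟫)))
        ∂(volume : Measure (Euc d)).toSphere := by
    intro β
    rw [← integral_tokenLaw hρ hρnn (fun y => Real.exp (-(β * (1 - ⟪q, y⟫)))), ← hlaw,
      integral_map hmeas.aemeasurable]
    exact Continuous.aestronglyMeasurable (by fun_prop)
  rw [constant_eq hd]
  refine ((angular_limit hd hq hρ).comp tendsto_sqrt_atTop).congr' ?_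
  filter_upwards [eventually_ge_atTop 0] with β hβ
  have hpow : √β ^ (d - 1) = β ^ (1 / alpha d) := by
    rw [one_div_alpha, Real.sqrt_eq_rpow, ← Real.rpow_natCast, ← Real.rpow_mul hβ,
      Nat.cast_sub (by omega)]
    congr 1; push_cast; ring
  rw [Function.comp_apply, hpow, Real.sq_sqrt hβ, hI]

end AttnScaling
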